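/- arXiv:2012.14421 — 2 statements merged into one kernel-verified Lean document; each statement's English description precedes it below -/
import Mathlib

section
/- Let (V, ℓ_V, δ_V, v₀) and (W, ℓ_W, δ_W, w₀) be rooted deterministic binary labelled transition systems over the same label type L, with V and W finite (Fintype). Then the two systems have the same unfolding (ℓ_V (w.foldl δ_V v₀) = ℓ_W (w.foldl δ_W w₀) for every w : List Bool) if and only if this equality holds for every word w of length at most (Fintype.card V) * (Fintype.card W). -/
/-!
Run both systems in parallel on a word longer than `|V| * |W|`. By the pigeonhole principle, two
different prefixes lead to the same pair of states, and cutting out the segment between them gives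
a strictly shorter word leading to the same final pair (`exists_shorter_word`). Iterating, every
pair of states reached by some word is reached by one of length at most `|V| * |W|`, so agreement
of labels on short words already compares the labels at all jointly reachable pairs.
-/

/-- Excision of a loop: a word too long for the product system to avoid repeating a pair of states
can be replaced by a shorter one that ends in the same pair. -/
theorem exists_shorter_word {V W A : Type*} [Fintype V] [Fintype W]
    (δV : V → A → V) (v₀ : V) (δW : W → A → W) (w₀ : W) (w : List A)
    (hw : Fintype.card V * Fintype.card W < w.length) :
    ∃ u : List A, u.length < w.length ∧
      u.foldl δV v₀ = w.foldl δV v₀ ∧ u.foldl δW w₀ = w.foldl δW w₀ := by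
  obtain ⟨i, j, hij, h⟩ : ∃ i j : Fin w.length, i < j ∧
      ((w.take i).foldl δV v₀, (w.take i).foldl δW w₀) =
        ((w.take j).foldl δV v₀, (w.take j).foldl δW w₀) := by
    obtain ⟨i, j, hne, h⟩ := Fintype.exists_ne_map_eq_of_card_lt
      (fun i : Fin w.length => ((w.take i).foldl δV v₀, (w.take i).foldl δW w₀))
      (by simpa using hw)
    rcases lt_or_gt_of_ne hne with hlt | hlt
    · exact ⟨i, j, hlt, h⟩
    · exact ⟨j, i, hlt, h.symm⟩
  obtain ⟨hV, hW⟩ := Prod.ext_iff.mp h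
  refine ⟨w.take i ++ w.drop j, ?_, ?_, ?_⟩
  · have hi := i.isLt
    have hj := j.isLt
    have hlt : (i : ℕ) < j := hij
    simp only [List.length_append, List.length_take, List.length_drop]
    omega
  · dsimp only at hV
    rw [List.foldl_append, hV, ← List.foldl_append, List.take_append_drop]
  · dsimp only at hW
    rw [List.foldl_append, hW, ← List.foldl_append, List.take_append_drop]

theorem same_unfolding_iff_bounded {L V W : Type*} [Fintype V] [Fintype W]
    (ℓV : V → L) (δV : V → Bool → V) (v₀ : V)
    (ℓW : W → L) (δW : W → Bool → W) (w₀ : W) :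
    (∀ w : List Bool, ℓV (w.foldl δV v₀) = ℓW (w.foldl δW w₀)) ↔
    (∀ w : List Bool, w.length ≤ Fintype.card V * Fintype.card W →
      ℓV (w.foldl δV v₀) = ℓW (w.foldl δW w₀)) := by
  refine ⟨fun h w _ => h w, fun h w => ?_⟩
  induction hn : w.length using Nat.strong_induction_on generalizing w with
  | _ n ih =>
    by_cases hw : w.length ≤ Fintype.card V * Fintype.card W
    · exact h w hw
    · obtain ⟨u, hu, hV, hW⟩ := exists_shorter_word δV v₀ δW w₀ w (not_le.mp hw)
      rw [← hV, ← hW]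
      exact ih u.length (hn ▸ hu) u rfl
end

section
/- Let f, h : ℕ → ℕ satisfy h x = (if f x = 0 then x else h (x + 1)) for all x. Then for every n, if there exists k with n ≤ k and f k = 0, then h n is the least zero of f at or above n: n ≤ h n, f (h n) = 0, and f m ≠ 0 for every m with n ≤ m and m < h n. -/
/-! The recurrence alone does not determine `h` beyond the last zero of `f`, but below a zero `k`
it can be unfolded at most `k - n` times before stopping. The claim therefore follows by downward
induction on the starting point `n`, from `k`: if `f n = 0` the search stops with `h n = n`;
otherwise `h n = h (n + 1)`, and excluding `n` extends minimality from `n + 1` to `n`. -/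

theorem unbounded_search_correct (f h : ℕ → ℕ)
    (hrec : ∀ x, h x = if f x = 0 then x else h (x + 1)) :
    ∀ n, (∃ k, n ≤ k ∧ f k = 0) →
      n ≤ h n ∧ f (h n) = 0 ∧ ∀ m, n ≤ m → m < h n → f m ≠ 0 := by
  rintro n ⟨k, hnk, hk⟩
  -- Downward induction on the starting point, from the known zero `k`.
  induction hnk using Nat.decreasingInduction with
  | self =>
    have hkk : h k = k := by rw [hrec, if_pos hk]
    rw [hkk]
    exact ⟨le_rfl, hk, fun m h1 h2 => absurd h2 (not_lt.mpr h1)⟩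
  | of_succ n _ ih =>
    by_cases hn : f n = 0
    · have hnn : h n = n := by rw [hrec, if_pos hn]
      rw [hnn]
      exact ⟨le_rfl, hn, fun m h1 h2 => absurd h2 (not_lt.mpr h1)⟩
    · have hstep : h n = h (n + 1) := by rw [hrec n, if_neg hn]
      rw [hstep]
      obtain ⟨hle, hzero, hmin⟩ := ih
      refine ⟨by omega, hzero, fun m h1 h2 => ?_⟩
      rcases h1.eq_or_lt with rfl | hlt
      · exact hn
      · exact hmin m hlt h2
end
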